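/- arXiv:1203.0130 — 2 statements merged into one kernel-verified Lean document; each statement's English description precedes it below -/
import Mathlib

section
/- Let g be a finite non-negative measure on ℝ^d. Suppose there are 0 < α < a < 1 and κ ≥ 0 such that for every φ ∈ C^α_b(ℝ^d) and every h ∈ ℝ^d with |h| ≤ 1, |∫ [φ(x+h) − φ(x)] g(dx)| ≤ κ ‖φ‖_{C^α_b} |h|^a. Then g has a density in the Besov space B^{a−α}_{1,∞}(ℝ^d), and ‖g‖_{B^{a−α}_{1,∞}} ≤ g(ℝ^d) + C_{d,a,α} κ. -/
/-!
Write `A_ε ψ (x) = ∫ ψ (x + ε z) μ(dz)` for a fixed probability measure `μ` on the unit ball with a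
smooth density. If `ψ` is continuous and `|ψ| ≤ 1`, then `A_ε ψ` is `α`-Hölder with norm
`≲ ε^{-α}` (interpolate between the sup bound and the Lipschitz bound `K / ε`), so the hypothesis
gives `|∫ (A_ε ψ (x + h) - A_ε ψ (x)) g(dx)| ≲ κ ε^{-α} |h|^a`.

The error `∫ (A_ε ψ - ψ) dg` is controlled by telescoping over the scales `ε 2^{-n}`. The operators
`A_ε` commute, so
`A_ε ψ - A_{ε/2} ψ = (A_ε ψ - A_{ε/2} A_ε ψ) + (A_ε A_{ε/2} ψ - A_{ε/2} ψ)`,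
and each bracket is an average of translation increments, of length at most `ε`, of a function of
Hölder norm `≲ ε^{-α}`. Its `g`-integral is thus `≲ κ ε^{a-α}`, which is summable over dyadic scales
because `α < a`; this is `abs_integral_avg_sub_le`.

Two consequences follow, after passing from continuous to measurable `ψ` by density in `L¹`
(`abs_integral_sub_le_of_continuous`):
* `g` differs in total variation by `O(κ ε^{a-α})` from the absolutely continuous law of `x + ε z`
  under `g ⊗ μ`, hence is absolutely continuous;
* choosing `ε = |h|`, `|∫ (ψ (x + h) - ψ (x)) g(dx)| ≲ κ |h|^{a-α}`, and testing with `ψ` the sign of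
  `f (x + h) - f x` bounds `∫ |f (x + h) - f x| dx` for the density `f`.
-/

open MeasureTheory Filter Topology

set_option linter.unusedSectionVars false

section Helpers

variable {E : Type*} [NormedAddCommGroup E] [InnerProductSpace ℝ E] [FiniteDimensional ℝ E]
  [MeasurableSpace E] [BorelSpace E]

/-! ### The smoothing kernel -/

/-- `μ` is an absolutely continuous probability measure on the closed unit ball which is Lipschitz
under translation in total variation, with constant `K` (tested against continuous functions bounded
by `1`). The normalisation `2 ≤ K` lets the same `K` dominate the trivial bound `2`. -/
structure IsSmoothingKernel (μ : Measure E) (K : ℝ) : Prop where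
  prob : IsProbabilityMeasure μ
  ac : μ ≪ volume
  supp : ∀ᵐ z ∂μ, ‖z‖ ≤ 1
  two_le : 2 ≤ K
  lip : ∀ Ψ : E → ℝ, Continuous Ψ → (∀ z, |Ψ z| ≤ 1) → ∀ w,
    |∫ z, Ψ (z + w) ∂μ - ∫ z, Ψ z ∂μ| ≤ K * ‖w‖

/-- The normalised smooth bump function is the density of a smoothing kernel: it is Lipschitz, and
`ρ (· - w) - ρ` is supported in the union of the unit balls around `0` and `w`. -/
lemma exists_smoothing_kernel : ∃ (μ : Measure E) (K : ℝ), IsSmoothingKernel μ K := by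
  let b : ContDiffBump (0 : E) := ⟨1 / 2, 1, by norm_num, by norm_num⟩
  set ρ : E → ℝ := b.normed volume with hρ
  have hsmooth : ContDiff ℝ 1 ρ := b.contDiff_normed (n := 1)
  have hρc : Continuous ρ := hsmooth.continuous
  have hcs : HasCompactSupport ρ := b.hasCompactSupport_normed
  have hint : Integrable ρ := hρc.integrable_of_hasCompactSupport hcs
  have hnn : ∀ x, 0 ≤ ρ x := fun x => b.nonneg_normed x
  have hsupp : ∀ x : E, 1 ≤ ‖x‖ → ρ x = 0 := by
    intro x hx
    have : x ∉ Function.support ρ := by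
      rw [hρ, b.support_normed_eq]
      simpa [b] using hx
    simpa using this
  obtain ⟨L, hL⟩ := ContDiff.lipschitzWith_of_hasCompactSupport hcs hsmooth (by norm_num)
  have hμint : ∀ Φ : E → ℝ,
      ∫ z, Φ z ∂(volume.withDensity fun z => ENNReal.ofReal (ρ z)) = ∫ z, ρ z * Φ z := by
    intro Φ
    rw [integral_withDensity_eq_integral_toReal_smul (by fun_prop) (by simp)]
    simp [ENNReal.toReal_ofReal (hnn _)]
  let V : ℝ := volume.real (Metric.ball (0 : E) 1)
  have hV : 0 ≤ V := measureReal_nonneg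
  refine ⟨volume.withDensity fun z => ENNReal.ofReal (ρ z), 2 + 2 * L * V, ⟨?_⟩,
    withDensity_absolutelyContinuous _ _, ?_, ?_, ?_⟩
  · rw [withDensity_apply _ MeasurableSet.univ, Measure.restrict_univ,
      ← ofReal_integral_eq_lintegral_ofReal hint (ae_of_all _ hnn), hρ, b.integral_normed]
    simp
  · rw [ae_withDensity_iff (by fun_prop)]
    refine ae_of_all _ fun z hz => ?_
    by_contra hcon
    exact hz (by simp [hsupp z (by linarith)])
  · have := L.coe_nonneg
    nlinarith [mul_nonneg this hV]
  · intro Ψ hΨ hΨ1 w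
    have hi1 : Integrable fun z => ρ (z - w) * Ψ z :=
      (hint.comp_sub_right w).mul_bdd (c := 1) hΨ.aestronglyMeasurable (ae_of_all _ hΨ1)
    have hi2 : Integrable fun z => ρ z * Ψ z :=
      hint.mul_bdd (c := 1) hΨ.aestronglyMeasurable (ae_of_all _ hΨ1)
    have e1 : ∫ z, ρ z * Ψ (z + w) = ∫ z, ρ (z - w) * Ψ z := by
      rw [← integral_sub_right_eq_self (fun z => ρ z * Ψ (z + w)) w]
      simp
    rw [hμint, hμint, e1, ← integral_sub hi1 hi2]
    have hbI : ∀ c : E, Integrable ((Metric.ball c 1).indicator fun _ => L * ‖w‖) := fun c =>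
      (integrable_indicator_iff Metric.isOpen_ball.measurableSet).2
        (integrableOn_const (measure_ball_lt_top.ne))
    have hvol : ∀ c : E, ∫ z, (Metric.ball c 1).indicator (fun _ => L * ‖w‖) z = V * (L * ‖w‖) := by
      intro c
      rw [integral_indicator_const _ Metric.isOpen_ball.measurableSet, smul_eq_mul]
      congr 1
      simp only [V, Measure.real, Measure.addHaar_ball_center]
    have key : ∀ z, ‖ρ (z - w) * Ψ z - ρ z * Ψ z‖ ≤
        (Metric.ball (0 : E) 1).indicator (fun _ => L * ‖w‖) z +
          (Metric.ball w 1).indicator (fun _ => L * ‖w‖) z := by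
      intro z
      have hLw : 0 ≤ L * ‖w‖ := by positivity
      have h1 : ‖ρ (z - w) * Ψ z - ρ z * Ψ z‖ ≤ |ρ (z - w) - ρ z| := by
        rw [← sub_mul, norm_mul]
        exact mul_le_of_le_one_right (norm_nonneg _) (hΨ1 z)
      have h2 : |ρ (z - w) - ρ z| ≤ L * ‖w‖ := by
        have := hL.dist_le_mul (z - w) z
        simpa [Real.dist_eq, dist_eq_norm] using this
      by_cases hz0 : z ∈ Metric.ball (0 : E) 1
      · rw [Set.indicator_of_mem hz0]
        have : 0 ≤ (Metric.ball w 1).indicator (fun _ => L * ‖w‖) z :=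
          Set.indicator_nonneg (fun _ _ => hLw) _
        linarith
      · by_cases hzw : z ∈ Metric.ball w 1
        · rw [Set.indicator_of_mem hzw, Set.indicator_of_notMem hz0]
          linarith
        · have e1 : ρ z = 0 := hsupp z (by simpa using hz0)
          have e2 : ρ (z - w) = 0 := hsupp _ (by simpa [dist_eq_norm] using hzw)
          rw [Set.indicator_of_notMem hzw, Set.indicator_of_notMem hz0, e1, e2]
          simp
    calc |∫ z, (ρ (z - w) * Ψ z - ρ z * Ψ z)|
        ≤ ∫ z, ((Metric.ball (0 : E) 1).indicator (fun _ => L * ‖w‖) z +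
          (Metric.ball w 1).indicator (fun _ => L * ‖w‖) z) :=
          norm_integral_le_of_norm_le ((hbI 0).add (hbI w)) (ae_of_all _ key)
      _ = 2 * L * V * ‖w‖ := by
          rw [integral_add (hbI 0) (hbI w), hvol, hvol]; ring
      _ ≤ _ := by nlinarith [norm_nonneg w]

/-! ### From continuous to measurable test functions -/

lemma exists_clamped_approx (ν : Measure E) [IsFiniteMeasure ν] (ψ : E → ℝ) (hψ : Measurable ψ)
    (h1 : ∀ x, |ψ x| ≤ 1) {δ : ℝ} (hδ : 0 < δ) :
    ∃ φ : E → ℝ, Continuous φ ∧ (∀ x, |φ x| ≤ 1) ∧ ∫ x, |ψ x - φ x| ∂ν ≤ δ := by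
  have hi : Integrable ψ ν :=
    Integrable.of_bound hψ.aestronglyMeasurable 1 (ae_of_all _ h1)
  obtain ⟨φ, hφ, hφi⟩ := hi.exists_boundedContinuous_integral_sub_le hδ
  -- Truncation to `[-1, 1]` fixes `ψ` and is `1`-Lipschitz, so it does not worsen the approximation.
  have hc : Continuous fun x => max (-1) (min 1 (φ x)) := by fun_prop
  have hb : ∀ x, |max (-1) (min 1 (φ x))| ≤ 1 := fun x =>
    abs_le.2 ⟨le_max_left _ _, max_le (by norm_num) (min_le_left _ _)⟩
  refine ⟨fun x => max (-1) (min 1 (φ x)), hc, hb, le_trans ?_ hφ⟩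
  refine integral_mono_of_nonneg (ae_of_all _ fun x => abs_nonneg _) (hi.sub hφi).norm
    (ae_of_all _ fun x => ?_)
  have e : ψ x = max (-1) (min 1 (ψ x)) := by
    rw [min_eq_right (abs_le.1 (h1 x)).2, max_eq_right (abs_le.1 (h1 x)).1]
  simp only [Real.norm_eq_abs]
  calc |ψ x - max (-1) (min 1 (φ x))| = |max (-1) (min 1 (ψ x)) - max (-1) (min 1 (φ x))| := by
        rw [← e]
    _ ≤ |min 1 (ψ x) - min 1 (φ x)| := by
        simpa using abs_max_sub_max_le_max (-1) (min 1 (ψ x)) (-1) (min 1 (φ x))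
    _ ≤ |ψ x - φ x| := by
        simpa using abs_min_sub_min_le_max 1 (ψ x) 1 (φ x)

/-- A total variation bound between two finite measures only needs to be tested on continuous
functions, since these are dense in `L¹(ν₁ + ν₂)`. -/
lemma abs_integral_sub_le_of_continuous (ν₁ ν₂ : Measure E) [IsFiniteMeasure ν₁]
    [IsFiniteMeasure ν₂] (c : ℝ)
    (hc : ∀ φ : E → ℝ, Continuous φ → (∀ x, |φ x| ≤ 1) → |∫ x, φ x ∂ν₁ - ∫ x, φ x ∂ν₂| ≤ c)
    (ψ : E → ℝ) (hψ : Measurable ψ) (h1 : ∀ x, |ψ x| ≤ 1) :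
    |∫ x, ψ x ∂ν₁ - ∫ x, ψ x ∂ν₂| ≤ c := by
  refine le_of_forall_pos_le_add fun δ hδ => ?_
  obtain ⟨φ, hφc, hφ1, hφ⟩ := exists_clamped_approx (ν₁ + ν₂) ψ hψ h1 hδ
  have hψi : ∀ ν : Measure E, IsFiniteMeasure ν → Integrable ψ ν := fun ν _ =>
    Integrable.of_bound hψ.aestronglyMeasurable 1 (ae_of_all _ h1)
  have hφi : ∀ ν : Measure E, IsFiniteMeasure ν → Integrable φ ν := fun ν _ =>
    Integrable.of_bound hφc.aestronglyMeasurable 1 (ae_of_all _ hφ1)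
  have hd : ∀ ν : Measure E, IsFiniteMeasure ν →
      |∫ x, ψ x ∂ν - ∫ x, φ x ∂ν| ≤ ∫ x, |ψ x - φ x| ∂ν := fun ν hν => by
    rw [← integral_sub (hψi ν hν) (hφi ν hν)]
    exact abs_integral_le_integral_abs
  rw [integral_add_measure (f := fun x => |ψ x - φ x|) ((hψi ν₁ ‹_›).sub (hφi ν₁ ‹_›)).abs
    ((hψi ν₂ ‹_›).sub (hφi ν₂ ‹_›)).abs] at hφ
  have a1 := abs_le.1 (hd ν₁ ‹_›)
  have a2 := abs_le.1 (hd ν₂ ‹_›)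
  have a3 := abs_le.1 (hc φ hφc hφ1)
  rw [abs_le]
  constructor <;> linarith

/-! ### Averaging at scale `ε` -/

/-- The average of `ψ` around `x` at scale `ε`, with weight `μ`. -/
noncomputable def avg (μ : Measure E) (ε : ℝ) (ψ : E → ℝ) (x : E) : ℝ :=
  ∫ z, ψ (x + ε • z) ∂μ

/-- The regularity hypothesis on `g`: the `g`-integral of the increment of an `α`-Hölder function
of norm `N` under a translation by `h`, `‖h‖ ≤ 1`, is at most `κ N ‖h‖^a`. A single `N` bounds both
the supremum and the Hölder seminorm. -/
def HolderShiftBound (g : Measure E) (κ α a : ℝ) : Prop :=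
  ∀ (φ : E → ℝ) (N : ℝ), (∀ x, |φ x| ≤ N) → (∀ x y, |φ x - φ y| ≤ N * ‖x - y‖ ^ α) →
    ∀ h : E, ‖h‖ ≤ 1 → |∫ x, (φ (x + h) - φ x) ∂g| ≤ κ * N * ‖h‖ ^ a

lemma abs_avg_le {μ : Measure E} [IsProbabilityMeasure μ] {ψ : E → ℝ}
    (h1 : ∀ x, |ψ x| ≤ 1) (ε : ℝ) (x : E) : |avg μ ε ψ x| ≤ 1 := by
  have := norm_integral_le_of_norm_le_const (μ := μ) (f := fun z => ψ (x + ε • z)) (C := 1)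
    (ae_of_all _ fun z => h1 _)
  simpa [avg] using this

lemma continuous_avg {μ : Measure E} [IsProbabilityMeasure μ] {ψ : E → ℝ} (hψ : Continuous ψ)
    (h1 : ∀ x, |ψ x| ≤ 1) (ε : ℝ) : Continuous (avg μ ε ψ) := by
  refine continuous_of_dominated (bound := fun _ => 1) (fun x => ?_) (fun x => ?_)
    (integrable_const _) (ae_of_all _ fun z => by fun_prop)
  · exact Continuous.aestronglyMeasurable (by fun_prop)
  · exact ae_of_all _ fun z => h1 _

lemma avg_comm {μ : Measure E} [IsProbabilityMeasure μ] {ψ : E → ℝ} (hψ : Continuous ψ)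
    (h1 : ∀ x, |ψ x| ≤ 1) (ε δ : ℝ) : avg μ ε (avg μ δ ψ) = avg μ δ (avg μ ε ψ) := by
  funext x
  unfold avg
  rw [integral_integral_swap]
  · simp only [add_right_comm]
  · refine Integrable.of_bound (Continuous.aestronglyMeasurable ?_) 1 (ae_of_all _ fun p => h1 _)
    simp only [Function.uncurry_def]
    fun_prop

lemma avg_holder {μ : Measure E} {K : ℝ} (hμ : IsSmoothingKernel μ K) {ψ : E → ℝ}
    (hψ : Continuous ψ) (h1 : ∀ x, |ψ x| ≤ 1) {ε α : ℝ} (hε : 0 < ε) (hα : 0 < α) (hα1 : α < 1)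
    (x y : E) : |avg μ ε ψ x - avg μ ε ψ y| ≤ K * ε ^ (-α) * ‖x - y‖ ^ α := by
  have := hμ.prob
  have hK := hμ.two_le
  set w : E := ε⁻¹ • (x - y) with hw
  have hnw : ‖w‖ = ε⁻¹ * ‖x - y‖ := by
    rw [hw, norm_smul, Real.norm_of_nonneg (by positivity)]
  have e : ε ^ (-α) * ‖x - y‖ ^ α = ‖w‖ ^ α := by
    rw [hnw, Real.mul_rpow (by positivity) (norm_nonneg _), Real.inv_rpow hε.le, Real.rpow_neg hε.le]
  rw [mul_assoc, e]
  -- `min 2 (K t) ≤ K t ^ α` for `t = ‖w‖`: use the Lipschitz bound if `t ≤ 1`, else the sup bound.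
  rcases le_total ‖w‖ 1 with hle | hge
  · have h2 := hμ.lip (fun z => ψ (y + ε • z)) (by fun_prop) (fun z => h1 _) w
    have e2 : ∀ z, y + ε • (z + w) = x + ε • z := by
      intro z
      rw [smul_add, hw, smul_inv_smul₀ hε.ne']
      abel
    simp only [e2] at h2
    refine h2.trans (mul_le_mul_of_nonneg_left ?_ (by linarith))
    simpa using Real.rpow_le_rpow_of_exponent_ge' (norm_nonneg w) hle hα.le hα1.le
  · have a1 := abs_le.1 (abs_avg_le (μ := μ) h1 ε x)
    have a2 := abs_le.1 (abs_avg_le (μ := μ) h1 ε y)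
    have : 1 ≤ ‖w‖ ^ α := Real.one_le_rpow hge hα.le
    rw [abs_le]
    constructor <;> nlinarith

lemma abs_integral_shift_avg_le {μ : Measure E} {K : ℝ} (hμ : IsSmoothingKernel μ K)
    {g : Measure E} {κ α a : ℝ} (hg : HolderShiftBound g κ α a)
    {ψ : E → ℝ} (hψ : Continuous ψ) (h1 : ∀ x, |ψ x| ≤ 1)
    {ε : ℝ} (hε : 0 < ε) (hε1 : ε ≤ 1) (hα : 0 < α) (hα1 : α < 1) (h : E) (hh : ‖h‖ ≤ 1) :
    |∫ x, (avg μ ε ψ (x + h) - avg μ ε ψ x) ∂g| ≤ κ * (K * ε ^ (-α)) * ‖h‖ ^ a := by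
  have := hμ.prob
  have hK := hμ.two_le
  refine hg _ _ (fun x => (abs_avg_le h1 ε x).trans ?_) (avg_holder hμ hψ h1 hε hα hα1) h hh
  have : 1 ≤ ε ^ (-α) := Real.one_le_rpow_of_pos_of_le_one_of_nonpos hε hε1 (by linarith)
  nlinarith

lemma integrable_of_continuous_bounded (g : Measure E) [IsFiniteMeasure g] {ψ : E → ℝ}
    (hψ : Continuous ψ) (h1 : ∀ x, |ψ x| ≤ 1) : Integrable ψ g :=
  Integrable.of_bound hψ.aestronglyMeasurable 1 (ae_of_all _ h1)

/-! ### The smoothing error -/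

/-- Averaging once more at scale `δ` amounts to averaging the translation increments of
`avg μ ε ψ` over vectors of length at most `δ`, each of which the hypothesis on `g` controls. -/
lemma abs_integral_avg_avg_sub_le {μ : Measure E} {K : ℝ} (hμ : IsSmoothingKernel μ K)
    {g : Measure E} [IsFiniteMeasure g] {κ α a : ℝ} (hκ : 0 ≤ κ) (hg : HolderShiftBound g κ α a)
    {ψ : E → ℝ} (hψ : Continuous ψ) (h1 : ∀ x, |ψ x| ≤ 1) {ε δ : ℝ} (hε : 0 < ε) (hε1 : ε ≤ 1)
    (hδ : 0 < δ) (hδ1 : δ ≤ 1) (hα : 0 < α) (hα1 : α < 1) (ha : 0 < a) :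
    |∫ x, avg μ δ (avg μ ε ψ) x ∂g - ∫ x, avg μ ε ψ x ∂g| ≤ κ * (K * ε ^ (-α)) * δ ^ a := by
  have := hμ.prob
  have hK := hμ.two_le
  set A := avg μ ε ψ with hA
  have hAc : Continuous A := continuous_avg hψ h1 ε
  have hA1 : ∀ x, |A x| ≤ 1 := abs_avg_le h1 ε
  have e : ∫ x, avg μ δ A x ∂g - ∫ x, A x ∂g = ∫ z, ∫ x, (A (x + δ • z) - A x) ∂g ∂μ := by
    rw [← integral_sub (integrable_of_continuous_bounded g (continuous_avg hAc hA1 δ)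
      (abs_avg_le hA1 δ)) (integrable_of_continuous_bounded g hAc hA1),
      integral_integral_swap]
    · refine integral_congr_ae (ae_of_all _ fun x => ?_)
      simp only
      rw [integral_sub (integrable_of_continuous_bounded μ (by fun_prop) fun z => hA1 _)
        (integrable_const _)]
      simp [avg]
    · refine Integrable.of_bound (Continuous.aestronglyMeasurable ?_) 2
        (ae_of_all _ fun p => ?_)
      · simp only [Function.uncurry_def]
        fun_prop
      · have a1 := abs_le.1 (hA1 (p.2 + δ • p.1))
        have a2 := abs_le.1 (hA1 p.2)
        simp only [Function.uncurry_def, Real.norm_eq_abs]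
        rw [abs_le]
        constructor <;> linarith
  rw [e]
  have hb : ∀ᵐ z ∂μ, ‖∫ x, (A (x + δ • z) - A x) ∂g‖ ≤ κ * (K * ε ^ (-α)) * δ ^ a := by
    filter_upwards [hμ.supp] with z hz
    have hn : ‖δ • z‖ ≤ δ := by
      rw [norm_smul, Real.norm_of_nonneg hδ.le]
      exact mul_le_of_le_one_right hδ.le hz
    refine (abs_integral_shift_avg_le hμ hg hψ h1 hε hε1 hα hα1 _ (hn.trans hδ1)).trans ?_
    gcongr
  simpa using norm_integral_le_of_norm_le_const hb

/-- One dyadic step, comparing both averages with the common double average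
`avg μ (ε / 2) (avg μ ε ψ) = avg μ ε (avg μ (ε / 2) ψ)`. -/
lemma abs_integral_avg_sub_avg_half_le {μ : Measure E} {K : ℝ} (hμ : IsSmoothingKernel μ K)
    {g : Measure E} [IsFiniteMeasure g] {κ α a : ℝ} (hκ : 0 ≤ κ) (hg : HolderShiftBound g κ α a)
    {ψ : E → ℝ} (hψ : Continuous ψ) (h1 : ∀ x, |ψ x| ≤ 1) {ε : ℝ} (hε : 0 < ε) (hε1 : ε ≤ 1)
    (hα : 0 < α) (hα1 : α < 1) (ha : 0 < a) :
    |∫ x, avg μ ε ψ x ∂g - ∫ x, avg μ (ε / 2) ψ x ∂g| ≤ 3 * κ * K * ε ^ (a - α) := by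
  have := hμ.prob
  have hK := hμ.two_le
  have b1 := abs_integral_avg_avg_sub_le hμ hκ hg hψ h1 hε hε1 (half_pos hε) (by linarith)
    hα hα1 ha
  have b2 := abs_integral_avg_avg_sub_le hμ hκ hg hψ h1 (half_pos hε) (by linarith) hε hε1
    hα hα1 ha
  rw [avg_comm hψ h1] at b2
  have e1 : ε ^ (-α) * (ε / 2) ^ a ≤ ε ^ (a - α) := by
    rw [sub_eq_neg_add, Real.rpow_add hε]
    gcongr
    linarith
  have e2 : (ε / 2) ^ (-α) * ε ^ a ≤ 2 * ε ^ (a - α) := by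
    have h2 : (2 : ℝ) ^ α ≤ 2 := by
      simpa using Real.rpow_le_rpow_of_exponent_le (x := 2) (by norm_num) hα1.le
    have : (ε / 2) ^ (-α) = 2 ^ α * ε ^ (-α) := by
      rw [Real.div_rpow hε.le (by norm_num), Real.rpow_neg (x := 2) (by norm_num)]
      field_simp
    rw [this, sub_eq_neg_add, Real.rpow_add hε, mul_assoc]
    gcongr
  have hκK : 0 ≤ κ * K := by positivity
  have f1 := mul_le_mul_of_nonneg_left e1 hκK
  have f2 := mul_le_mul_of_nonneg_left e2 hκK
  rw [abs_le] at *
  constructor <;> nlinarith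

/-- The smoothing error is the sum of the dyadic steps, a geometric series of ratio
`(1 / 2) ^ (a - α)`. -/
lemma abs_integral_avg_sub_le {μ : Measure E} {K : ℝ} (hμ : IsSmoothingKernel μ K)
    {g : Measure E} [IsFiniteMeasure g] {κ α a : ℝ} (hκ : 0 ≤ κ) (hg : HolderShiftBound g κ α a)
    {ψ : E → ℝ} (hψ : Continuous ψ) (h1 : ∀ x, |ψ x| ≤ 1) {ε : ℝ} (hε : 0 < ε) (hε1 : ε ≤ 1)
    (hα : 0 < α) (hαa : α < a) (ha : a < 1) :
    |∫ x, avg μ ε ψ x ∂g - ∫ x, ψ x ∂g| ≤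
      3 * κ * K * ε ^ (a - α) / (1 - (1 / 2 : ℝ) ^ (a - α)) := by
  have := hμ.prob
  have hs : 0 < a - α := by linarith
  have hr : (1 / 2 : ℝ) ^ (a - α) < 1 := Real.rpow_lt_one (by norm_num) (by norm_num) hs
  let r : ℕ → ℝ := fun n => ε * (1 / 2) ^ n
  have hr0 : ∀ n, 0 < r n := fun n => by positivity
  have hr1 : ∀ n, r n ≤ 1 := fun n =>
    mul_le_one₀ hε1 (by positivity) (pow_le_one₀ (by norm_num) (by norm_num))
  have hrt : Tendsto r atTop (𝓝 0) := by
    simpa [r] using (tendsto_pow_atTop_nhds_zero_of_lt_one (r := (1 / 2 : ℝ)) (by norm_num)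
      (by norm_num)).const_mul ε
  have hpt : ∀ x, Tendsto (fun n => avg μ (r n) ψ x) atTop (𝓝 (ψ x)) := by
    intro x
    have : Tendsto (fun n => ∫ z, ψ (x + r n • z) ∂μ) atTop (𝓝 (∫ _, ψ x ∂μ)) := by
      refine tendsto_integral_of_dominated_convergence (fun _ => 1)
        (fun n => Continuous.aestronglyMeasurable (by fun_prop)) (integrable_const _)
        (fun n => ae_of_all _ fun z => h1 _) (ae_of_all _ fun z => ?_)
      have : Tendsto (fun n => x + r n • z) atTop (𝓝 (x + (0 : ℝ) • z)) :=
        (hrt.smul_const z).const_add x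
      rw [zero_smul, add_zero] at this
      exact (hψ.tendsto x).comp this
    simpa [avg] using this
  have hlim : Tendsto (fun n => ∫ x, avg μ (r n) ψ x ∂g) atTop (𝓝 (∫ x, ψ x ∂g)) :=
    tendsto_integral_of_dominated_convergence (fun _ => 1)
      (fun n => (continuous_avg hψ h1 _).aestronglyMeasurable) (integrable_const _)
      (fun n => ae_of_all _ fun x => abs_avg_le h1 _ x) (ae_of_all _ hpt)
  have hstep : ∀ n, dist (∫ x, avg μ (r n) ψ x ∂g) (∫ x, avg μ (r (n + 1)) ψ x ∂g) ≤
      3 * κ * K * ε ^ (a - α) * ((1 / 2 : ℝ) ^ (a - α)) ^ n := by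
    intro n
    have e : r (n + 1) = r n / 2 := by simp only [r]; ring
    have e2 : r n ^ (a - α) = ε ^ (a - α) * ((1 / 2 : ℝ) ^ (a - α)) ^ n := by
      simp only [r]
      rw [Real.mul_rpow hε.le (by positivity), Real.rpow_pow_comm (by norm_num)]
    rw [e, Real.dist_eq]
    refine (abs_integral_avg_sub_avg_half_le hμ hκ hg hψ h1 (hr0 n) (hr1 n) hα (by linarith)
      (by linarith)).trans_eq ?_
    rw [e2]; ring
  have := dist_le_of_le_geometric_of_tendsto₀ _ _ hr hstep hlim
  simpa [r, Real.dist_eq] using this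

/-! ### Absolute continuity and regularity of the density -/

/-- At each scale `ε`, `g` is within `O(ε ^ (a - α))` in total variation of the law `ν` of
`x + ε • z` under `g.prod μ`, which does not charge Lebesgue-null sets. -/
lemma absolutelyContinuous_of_holderShiftBound {μ : Measure E} {K : ℝ}
    (hμ : IsSmoothingKernel μ K) {g : Measure E} [IsFiniteMeasure g] {κ α a : ℝ} (hκ : 0 ≤ κ)
    (hg : HolderShiftBound g κ α a) (hα : 0 < α) (hαa : α < a) (ha : a < 1) : g ≪ volume := by
  have := hμ.prob
  have hs : 0 < a - α := by linarith
  refine Measure.AbsolutelyContinuous.mk fun s hsm hs0 => ?_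
  set D : ℝ := 1 - (1 / 2 : ℝ) ^ (a - α)
  have hbound : ∀ n : ℕ, g.real s ≤ 3 * κ * K * (1 / ((n : ℝ) + 1)) ^ (a - α) / D := by
    intro n
    set ε : ℝ := 1 / ((n : ℝ) + 1) with hεdef
    have hε : 0 < ε := by positivity
    have hε1 : ε ≤ 1 := by
      rw [hεdef, div_le_one (by positivity)]
      have : (0 : ℝ) ≤ n := n.cast_nonneg
      linarith
    have hm : Measurable fun p : E × E => p.1 + ε • p.2 := by fun_prop
    set ν : Measure E := (g.prod μ).map fun p => p.1 + ε • p.2 with hν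
    have hνs : ν s = 0 := by
      rw [hν, Measure.map_apply hm hsm, Measure.measure_prod_null (hm hsm)]
      refine ae_of_all _ fun x => hμ.ac ?_
      have e : Prod.mk x ⁻¹' ((fun p : E × E => p.1 + ε • p.2) ⁻¹' s) =
          (fun z => ε • z) ⁻¹' ((fun y => x + y) ⁻¹' s) := rfl
      rw [e, Measure.addHaar_preimage_smul _ hε.ne', measure_preimage_add, hs0, mul_zero]
    have hνφ : ∀ φ : E → ℝ, Continuous φ → (∀ x, |φ x| ≤ 1) →
        ∫ x, φ x ∂ν = ∫ x, avg μ ε φ x ∂g := by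
      intro φ hφ hφ1
      rw [hν, integral_map hm.aemeasurable hφ.aestronglyMeasurable, integral_prod]
      · rfl
      · exact Integrable.of_bound (Continuous.aestronglyMeasurable (by fun_prop)) 1
          (ae_of_all _ fun p => hφ1 _)
    have := abs_integral_sub_le_of_continuous ν g (3 * κ * K * ε ^ (a - α) / D)
      (fun φ hφ hφ1 => by
        rw [hνφ φ hφ hφ1]
        exact abs_integral_avg_sub_le hμ hκ hg hφ hφ1 hε hε1 hα hαa ha)
      (s.indicator fun _ => 1) (measurable_const.indicator hsm) (fun x => by
        by_cases hx : x ∈ s <;> simp [hx])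
    rw [integral_indicator_const _ hsm, integral_indicator_const _ hsm, Measure.real, hνs] at this
    simpa using (le_abs_self _).trans ((abs_sub_comm _ _).trans_le this)
  have hlim : Tendsto (fun n : ℕ => 3 * κ * K * (1 / ((n : ℝ) + 1)) ^ (a - α) / D) atTop
      (𝓝 0) := by
    have := (tendsto_one_div_add_atTop_nhds_zero_nat (𝕜 := ℝ)).rpow_const
      (p := a - α) (Or.inr hs.le)
    rw [Real.zero_rpow hs.ne'] at this
    simpa using (this.const_mul (3 * κ * K)).div_const D
  have h0 : g.real s ≤ 0 := ge_of_tendsto' hlim hbound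
  exact (measureReal_eq_zero_iff).1 (le_antisymm h0 measureReal_nonneg)

/-- The hypothesis on `g` improved to bounded measurable test functions, at the price of the exponent
`a - α`: smooth at scale `‖h‖`. -/
lemma abs_integral_shift_sub_le {μ : Measure E} {K : ℝ}
    (hμ : IsSmoothingKernel μ K) {g : Measure E} [IsFiniteMeasure g] {κ α a : ℝ} (hκ : 0 ≤ κ)
    (hg : HolderShiftBound g κ α a) (hα : 0 < α) (hαa : α < a) (ha : a < 1)
    {h : E} (hh : 0 < ‖h‖) (hh1 : ‖h‖ ≤ 1) (ψ : E → ℝ) (hψ : Measurable ψ)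
    (h1 : ∀ x, |ψ x| ≤ 1) :
    |∫ x, ψ (x + h) ∂g - ∫ x, ψ x ∂g| ≤
      K * (1 + 6 / (1 - (1 / 2 : ℝ) ^ (a - α))) * κ * ‖h‖ ^ (a - α) := by
  have := hμ.prob
  have hm : Measurable fun x : E => x + h := by fun_prop
  rw [← integral_map hm.aemeasurable hψ.aestronglyMeasurable]
  refine abs_integral_sub_le_of_continuous _ _ _ (fun φ hφ hφ1 => ?_) ψ hψ h1
  rw [integral_map hm.aemeasurable hφ.aestronglyMeasurable]
  have hφh : Continuous fun x => φ (x + h) := by fun_prop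
  have b1 := abs_integral_avg_sub_le hμ hκ hg hφ hφ1 hh hh1 hα hαa ha
  have b2 := abs_integral_avg_sub_le hμ hκ hg hφh (fun x => hφ1 _) hh hh1 hα hαa ha
  have b3 := abs_integral_shift_avg_le hμ hg hφ hφ1 hh hh1 hα (by linarith) h hh1
  have e : ∀ x, avg μ ‖h‖ φ (x + h) = avg μ ‖h‖ (fun x => φ (x + h)) x := by
    intro x
    simp only [avg, add_right_comm]
  simp only [e] at b3
  rw [integral_sub (integrable_of_continuous_bounded g (continuous_avg hφh (fun x => hφ1 _) _)
      (abs_avg_le (fun x => hφ1 _) _))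
    (integrable_of_continuous_bounded g (continuous_avg hφ hφ1 _) (abs_avg_le hφ1 _))] at b3
  have e3 : κ * (K * ‖h‖ ^ (-α)) * ‖h‖ ^ a = K * κ * ‖h‖ ^ (a - α) := by
    rw [sub_eq_neg_add, Real.rpow_add hh]; ring
  have e4 : K * (1 + 6 / (1 - (1 / 2 : ℝ) ^ (a - α))) * κ * ‖h‖ ^ (a - α) =
      K * κ * ‖h‖ ^ (a - α) +
      2 * (3 * κ * K * ‖h‖ ^ (a - α) / (1 - (1 / 2 : ℝ) ^ (a - α))) := by ring
  rw [e3] at b3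
  rw [e4]
  rw [abs_le] at *
  constructor <;> linarith

/-- A bound on the translation increments of `g` tested against bounded measurable functions is an
`L¹` bound on those of its density `f`: test with the sign of `f (x + h) - f x`. -/
lemma integral_abs_shift_sub_le {g : Measure E} {f : E → ℝ} (hf : Measurable f)
    (hf0 : ∀ x, 0 ≤ f x) (hfi : Integrable f)
    (hgf : g = volume.withDensity fun x => ENNReal.ofReal (f x)) (h : E) (c : ℝ)
    (hc : ∀ ψ : E → ℝ, Measurable ψ → (∀ x, |ψ x| ≤ 1) →
      |∫ x, ψ (x + -h) ∂g - ∫ x, ψ x ∂g| ≤ c) :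
    ∫ x, |f (x + h) - f x| ≤ c := by
  have hgint : ∀ Φ : E → ℝ, ∫ x, Φ x ∂g = ∫ x, f x * Φ x := by
    intro Φ
    rw [hgf, integral_withDensity_eq_integral_toReal_smul (by fun_prop) (by simp)]
    simp [ENNReal.toReal_ofReal (hf0 _)]
  have hS : MeasurableSet {x | f x ≤ f (x + h)} :=
    measurableSet_le hf (hf.comp (measurable_add_const h))
  let ψ : E → ℝ := {x | f x ≤ f (x + h)}.piecewise (fun _ => 1) (fun _ => -1)
  have hψ : Measurable ψ := Measurable.piecewise hS measurable_const measurable_const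
  have hψ1 : ∀ x, |ψ x| ≤ 1 := fun x => by
    by_cases hx : f x ≤ f (x + h) <;> simp [ψ, hx]
  have hfh : Integrable fun x => f (x + h) := hfi.comp_add_right h
  have e1 : ∫ x, f x * ψ (x + -h) = ∫ x, f (x + h) * ψ x := by
    rw [← integral_add_right_eq_self (fun x => f x * ψ (x + -h)) h]
    simp
  have e2 : ∀ x, |f (x + h) - f x| = f (x + h) * ψ x - f x * ψ x := by
    intro x
    by_cases hx : f x ≤ f (x + h)
    · rw [abs_of_nonneg (by linarith)]
      simp [ψ, hx]
    · rw [abs_of_neg (by linarith)]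
      simp [ψ, hx]
      ring
  have := hc ψ hψ hψ1
  rw [hgint, hgint, e1, ← integral_sub
    (hfh.mul_bdd (c := 1) hψ.aestronglyMeasurable (ae_of_all _ hψ1))
    (hfi.mul_bdd (c := 1) hψ.aestronglyMeasurable (ae_of_all _ hψ1))] at this
  simp only [e2]
  exact (le_abs_self _).trans this

end Helpers

open MeasureTheory

/-- Debussche–Romito lemma.  If a finite non-negative measure `g` on `ℝ^d` satisfies
`|∫ (φ(x+h) − φ(x)) g(dx)| ≤ κ ‖φ‖_{C^α_b} |h|^a` for all bounded `α`-Hölder `φ` and all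
`|h| ≤ 1` (with `0 < α < a < 1`), then `g` has a density belonging to the Besov space
`B^{a−α}_{1,∞}(ℝ^d)` with `‖g‖_{B^{a−α}_{1,∞}} ≤ g(ℝ^d) + C_{d,a,α} κ`. -/
theorem stmt_8 (d : ℕ) (α a : ℝ) (hα : 0 < α) (hαa : α < a) (ha : a < 1) :
    ∃ C : ℝ, 0 < C ∧
      ∀ (g : Measure (EuclideanSpace ℝ (Fin d))), IsFiniteMeasure g →
      ∀ κ : ℝ, 0 ≤ κ →
      (∀ (φ : EuclideanSpace ℝ (Fin d) → ℝ) (N : ℝ),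
          (∀ x, |φ x| ≤ N) → (∀ x y, |φ x - φ y| ≤ N * ‖x - y‖ ^ α) →
          ∀ h : EuclideanSpace ℝ (Fin d), ‖h‖ ≤ 1 →
            |∫ x, (φ (x + h) - φ x) ∂g| ≤ κ * N * ‖h‖ ^ a) →
      ∃ f : EuclideanSpace ℝ (Fin d) → ℝ, (∀ x, 0 ≤ f x) ∧ Integrable f ∧
        g = volume.withDensity (fun x => ENNReal.ofReal (f x)) ∧
        (∫ x, f x) ≤ (g Set.univ).toReal + C * κ ∧
        ∀ h : EuclideanSpace ℝ (Fin d), 0 < ‖h‖ → ‖h‖ < 1 →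
          (∫ x, f x) + (‖h‖ ^ (a - α))⁻¹ * ∫ x, |f (x + h) - f x|
            ≤ (g Set.univ).toReal + C * κ := by
  obtain ⟨μ, K, hμ⟩ := exists_smoothing_kernel (E := EuclideanSpace ℝ (Fin d))
  have hK := hμ.two_le
  have hr : (1 / 2 : ℝ) ^ (a - α) < 1 :=
    Real.rpow_lt_one (by norm_num) (by norm_num) (by linarith)
  have hD : 0 < 1 - (1 / 2 : ℝ) ^ (a - α) := by linarith
  refine ⟨K * (1 + 6 / (1 - (1 / 2 : ℝ) ^ (a - α))), by positivity, ?_⟩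
  intro g hfin κ hκ hg
  replace hg : HolderShiftBound g κ α a := hg
  have hac := absolutelyContinuous_of_holderShiftBound hμ hκ hg hα hαa ha
  set C := K * (1 + 6 / (1 - (1 / 2 : ℝ) ^ (a - α)))
  have hC : 0 < C := by positivity
  have hfm : Measurable fun x => (g.rnDeriv volume x).toReal :=
    (Measure.measurable_rnDeriv g volume).ennreal_toReal
  have hfi : Integrable fun x => (g.rnDeriv volume x).toReal := Measure.integrable_toReal_rnDeriv
  have hgf : g = volume.withDensity
      fun x => ENNReal.ofReal ((g.rnDeriv volume x).toReal) := by
    conv_lhs => rw [← Measure.withDensity_rnDeriv_eq g volume hac]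
    refine withDensity_congr_ae ?_
    filter_upwards [Measure.rnDeriv_lt_top g volume] with x hx
    rw [ENNReal.ofReal_toReal hx.ne]
  have hmass : ∫ x, (g.rnDeriv volume x).toReal = (g Set.univ).toReal :=
    Measure.integral_toReal_rnDeriv hac
  refine ⟨fun x => (g.rnDeriv volume x).toReal, fun x => ENNReal.toReal_nonneg, hfi, hgf, ?_, ?_⟩
  · rw [hmass]
    have : 0 ≤ C * κ := by positivity
    linarith
  · intro h hh hh1
    rw [hmass]
    have hp : 0 < ‖h‖ ^ (a - α) := Real.rpow_pos_of_pos hh _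
    have hmain := integral_abs_shift_sub_le hfm (fun x => ENNReal.toReal_nonneg) hfi hgf h
      (C * κ * ‖h‖ ^ (a - α)) (fun ψ hψ h1 => by
        have := abs_integral_shift_sub_le hμ hκ hg hα hαa ha (h := -h) (by simpa using hh)
          (by simpa using hh1.le) ψ hψ h1
        rwa [norm_neg] at this)
    have : (‖h‖ ^ (a - α))⁻¹ * ∫ x, |(g.rnDeriv volume (x + h)).toReal -
        (g.rnDeriv volume x).toReal| ≤ C * κ := by
      rw [inv_mul_le_iff₀ hp, mul_comm]
      exact hmain
    linarith
end

section
/- Let λ be a non-negative measure on ℝ³ with ∫|y| λ(dy) < ∞ and ∫|y|⁴ λ(dy) < ∞, and let k be the infinitely divisible probability distribution with Fourier transform k̂(ξ) = exp(−Φ(ξ)), Φ(ξ) = ∫(1 − e^{i⟨ξ,y⟩}) λ(dy). If ∫ e^{−Re Φ(ξ)} (1+|ξ|) dξ < ∞, then k has a density and ‖∇k‖_{L¹(ℝ³)} ≤ C (1 + m₁(λ)⁴ + m₄(λ)) ∫ e^{−Re Φ(ξ)} (1+|ξ|) dξ, where m_n(λ) = ∫|y|^n λ(dy) and C is a universal constant.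 -/
/-!
Write `Ψ(w) = Φ(2πw)` and `f = e^{-Ψ}`. In the normalisation of Mathlib's Fourier transform,
`f` is the characteristic function of `k` and `𝓕 f` is its density.

The gradient `∇𝓕 f` is bounded by a multiple of `(1 + |x|)^{-4}`, which is integrable on `ℝ³`.
By `Real.pow_mul_norm_iteratedFDeriv_fourier_le`, both `|∇𝓕 f(x)|` and `|x|⁴ |∇𝓕 f(x)|` are
controlled by the integrals `∫ (1 + |w|) |Dⁿ f(w)| dw` with `n ≤ 4`, so it suffices to show
`|Dⁿ f| ≤ c (1 + m₁⁴ + m₄) e^{-Re Ψ}`.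

Set `D⁴ = 1 + m₁⁴ + m₄`. Then `D ≥ 1`, `m₁ ≤ D` and `m₄ ≤ D⁴`, and interpolation gives
`m_i ≤ 2 D^i` for `1 ≤ i ≤ 4` (`moment_bound`). Differentiating under the integral,
`|Dⁱ Ψ| ≤ (2π)ⁱ m_i ≤ (4πD)ⁱ` (`iteratedFDeriv_levyExponent`). This is exactly the geometric
form required by the Faà di Bruno estimate `norm_iteratedFDeriv_comp_le`, which yields
`|Dⁿ e^{-Ψ}| ≤ n! (4πD)ⁿ e^{-Re Ψ}`.

The same decay estimate makes `𝓕 f` integrable, so that Fourier inversion applies. Since `𝓕 f`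
is real, inversion says that `k + (𝓕 f)⁻ dx` and `(𝓕 f)⁺ dx` have the same characteristic
function and hence agree; evaluating at the open set `{𝓕 f < 0}` shows that it is null, hence
empty, and `k = 𝓕 f dx` (`eq_withDensity_of_integrable_charFun`).
-/

open MeasureTheory RealInnerProductSpace

namespace LevyDensity

open scoped FourierTransform ContDiff

variable {E : Type*} [NormedAddCommGroup E] [InnerProductSpace ℝ E] [FiniteDimensional ℝ E]
  [MeasurableSpace E] [BorelSpace E]

/-! ### Derivatives of the exponent -/

theorem norm_iteratedFDeriv_cexp (n : ℕ) (z : ℂ) :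
    ‖iteratedFDeriv ℝ n Complex.exp z‖ = Real.exp z.re := by
  have h : ContDiffAt ℂ n Complex.exp z := Complex.contDiff_exp.contDiffAt
  rw [← h.restrictScalars_iteratedFDeriv (𝕜 := ℝ), Function.comp_apply,
    ContinuousMultilinearMap.norm_restrictScalars, norm_iteratedFDeriv_eq_norm_iteratedDeriv]
  have := congrFun (iteratedDeriv_cexp_const_mul n 1) z
  simp only [one_mul, one_pow] at this
  rw [this, Complex.norm_exp]

/-- Interpolation of the moments between the first and the fourth, by splitting at `‖y‖ = D`. -/
theorem moment_bound {μ : Measure E} (h1 : Integrable (fun y => ‖y‖) μ)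
    (h4 : Integrable (fun y => ‖y‖ ^ 4) μ) {D : ℝ} (hD : 1 ≤ D)
    (hD1 : ∫ y, ‖y‖ ∂μ ≤ D) (hD4 : ∫ y, ‖y‖ ^ 4 ∂μ ≤ D ^ 4) {i : ℕ} (hi : 1 ≤ i)
    (hi4 : i ≤ 4) :
    Integrable (fun y => ‖y‖ ^ i) μ ∧ ∫ y, ‖y‖ ^ i ∂μ ≤ 2 * D ^ i := by
  have hD0 : 0 < D := by linarith
  have pt (y : E) : D ^ (4 - i) * ‖y‖ ^ i ≤ D ^ 3 * ‖y‖ + ‖y‖ ^ 4 := by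
    have hy := norm_nonneg y
    generalize ‖y‖ = t at hy ⊢
    have e3 : D ^ 3 = D ^ (4 - i) * D ^ (i - 1) := by rw [← pow_add]; congr 1; omega
    have ei : t ^ i = t ^ (i - 1) * t := by rw [← pow_succ]; congr 1; omega
    have e4 : t ^ 4 = t ^ (4 - i) * t ^ i := by rw [← pow_add]; congr 1; omega
    rcases le_total t D with h | h
    · calc D ^ (4 - i) * t ^ i = D ^ (4 - i) * (t ^ (i - 1) * t) := by rw [ei]
        _ ≤ D ^ (4 - i) * (D ^ (i - 1) * t) := by gcongr
        _ = D ^ 3 * t := by rw [e3]; ring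
        _ ≤ _ := le_add_of_nonneg_right (by positivity)
    · calc D ^ (4 - i) * t ^ i ≤ t ^ (4 - i) * t ^ i := by gcongr
        _ = t ^ 4 := e4.symm
        _ ≤ _ := le_add_of_nonneg_left (by positivity)
  have hg : Integrable (fun y => D ^ 3 * ‖y‖ + ‖y‖ ^ 4) μ := (h1.const_mul _).add h4
  have hint : Integrable (fun y => D ^ (4 - i) * ‖y‖ ^ i) μ := by
    refine hg.mono' (by fun_prop) (.of_forall fun y => ?_)
    rw [Real.norm_of_nonneg (by positivity)]
    exact pt y
  refine ⟨(integrable_const_mul_iff (IsUnit.mk0 _ (by positivity)) _).1 hint, ?_⟩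
  have h := integral_mono hint hg pt
  rw [integral_const_mul, integral_add (h1.const_mul _) h4, integral_const_mul] at h
  have e : D ^ 4 = D ^ (4 - i) * D ^ i := by rw [← pow_add]; congr 1; omega
  have h3 : D ^ 3 * ∫ y, ‖y‖ ∂μ ≤ D ^ 3 * D := by gcongr
  refine le_of_mul_le_mul_left (?_ : D ^ (4 - i) * _ ≤ D ^ (4 - i) * _)
    (by positivity : 0 < D ^ (4 - i))
  nlinarith

/-- The Lévy exponent `∫ (1 - e^{2πi⟨v,w⟩}) μ(dv)`, that is `Φ(2πw)`: the frequency is rescaled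
to match the character `𝐞 x = e^{2πix}` of Mathlib's Fourier transform. -/
noncomputable def levyExponent (μ : Measure E) (w : E) : ℂ :=
  ∫ v, (1 - (𝐞 ⟪v, w⟫ : ℂ)) ∂μ

/-- The bilinear form `(v, w) ↦ -⟪v, w⟫`, so that Mathlib's Fourier integral along it has the
kernel `e^{2πi⟨v,w⟩}` of a characteristic function. -/
noncomputable def negInner : E →L[ℝ] E →L[ℝ] ℝ := -(innerSL ℝ : E →L[ℝ] E →L[ℝ] ℝ)

omit [FiniteDimensional ℝ E] [MeasurableSpace E] [BorelSpace E] in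
theorem negInner_apply (v w : E) : negInner v w = -⟪v, w⟫ := rfl

omit [FiniteDimensional ℝ E] [MeasurableSpace E] [BorelSpace E] in
theorem norm_negInner_le : ‖(negInner : E →L[ℝ] E →L[ℝ] ℝ)‖ ≤ 1 := by
  refine ContinuousLinearMap.opNorm_le_bound₂ _ zero_le_one fun v w => ?_
  rw [negInner_apply, norm_neg, one_mul]
  exact norm_inner_le_norm v w

/-- The linear form `-2πi⟨v, ·⟩`; the derivative of `levyExponent μ` is
`∫ e^{2πi⟨v,w⟩} levyGradient v μ(dv)`. -/
noncomputable def levyGradient (v : E) : E →L[ℝ] ℂ :=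
  -VectorFourier.fourierSMulRight negInner (fun _ => (1 : ℂ)) v

omit [FiniteDimensional ℝ E] [MeasurableSpace E] [BorelSpace E] in
/-- The factor `2π` comes from the normalisation of the character `𝐞 x = e^{2πix}`. -/
theorem norm_levyGradient_le (v : E) : ‖levyGradient v‖ ≤ 2 * Real.pi * ‖v‖ := by
  rw [levyGradient]
  refine (norm_neg (VectorFourier.fourierSMulRight negInner (fun _ => (1 : ℂ)) v)).le.trans ?_
  refine (VectorFourier.norm_fourierSMulRight_le _ _ _).trans ?_
  calc 2 * Real.pi * ‖(negInner : E →L[ℝ] E →L[ℝ] ℝ)‖ * ‖v‖ * ‖(1 : ℂ)‖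
      ≤ 2 * Real.pi * 1 * ‖v‖ * ‖(1 : ℂ)‖ := by gcongr; exact norm_negInner_le
    _ = 2 * Real.pi * ‖v‖ := by simp

theorem aestronglyMeasurable_levyGradient (μ : Measure E) :
    AEStronglyMeasurable (levyGradient (E := E)) μ :=
  (aestronglyMeasurable_const.fourierSMulRight).neg

/-- The measure `μ` may be infinite, in which case the constant `1` is not integrable and Mathlib's
differentiation lemmas do not apply to `levyExponent` itself. Its derivative, however, is the
Fourier integral of a function of linear growth, which is integrable. -/
theorem hasFDerivAt_levyExponent {μ : Measure E} (h1 : Integrable (fun y => ‖y‖) μ) (w : E) :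
    HasFDerivAt (levyExponent μ)
      (VectorFourier.fourierIntegral 𝐞 μ negInner.toLinearMap₁₂ levyGradient w) w := by
  have hc (w : E) : Continuous (fun v : E => 𝐞 (-negInner v w)) := by
    simp only [negInner_apply, neg_neg]
    fun_prop
  have hm (w : E) : AEStronglyMeasurable (fun v : E => 1 - (𝐞 ⟪v, w⟫ : ℂ)) μ := by
    apply Continuous.aestronglyMeasurable
    fun_prop
  have hd (v w : E) : HasFDerivAt (fun w => 1 - (𝐞 ⟪v, w⟫ : ℂ))
      (𝐞 (-negInner v w) • levyGradient v) w := by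
    have h := (VectorFourier.hasFDerivAt_fourierChar_smul (negInner : E →L[ℝ] E →L[ℝ] ℝ)
      (fun _ => (1 : ℂ)) v w).const_sub 1
    simp only [negInner_apply, neg_neg, Circle.smul_def, smul_eq_mul, mul_one] at h
    rw [levyGradient, smul_neg, negInner_apply, neg_neg]
    exact h
  have hb (v w : E) : ‖𝐞 (-negInner v w) • levyGradient v‖ ≤ 2 * Real.pi * ‖v‖ := by
    rw [Circle.smul_def, norm_smul, Circle.norm_coe, one_mul]
    exact norm_levyGradient_le v
  refine hasFDerivAt_integral_of_dominated_of_fderiv_le (bound := fun v => 2 * Real.pi * ‖v‖)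
    (F' := fun w v => 𝐞 (-negInner v w) • levyGradient v)
    Filter.univ_mem (.of_forall hm) ?_ ?_
    (.of_forall fun v w _ => hb v w) (h1.const_mul _) (.of_forall fun v w _ => hd v w)
  · refine (h1.const_mul (2 * Real.pi * ‖w‖)).mono' (hm w) (.of_forall fun v => ?_)
    -- The mean value inequality on `[0, w]` gives `‖1 - 𝐞 ⟪v, w⟫‖ ≤ 2π ‖v‖ ‖w‖`.
    have := Convex.norm_image_sub_le_of_norm_hasFDerivWithin_le (s := Set.univ)
      (fun x _ => (hd v x).hasFDerivWithinAt) (fun x _ => hb v x) convex_univ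
      (Set.mem_univ 0) (Set.mem_univ w)
    simp only [inner_zero_right, AddChar.map_zero_eq_one, Circle.coe_one, sub_self, sub_zero] at this
    linarith
  · have := (hc w).aestronglyMeasurable (μ := μ)
    exact this.smul (aestronglyMeasurable_levyGradient μ)

theorem iteratedFDeriv_levyExponent {μ : Measure E}
    (h : ∀ i : ℕ, 1 ≤ i → i ≤ 4 → Integrable (fun y => ‖y‖ ^ i) μ) :
    ContDiff ℝ 4 (levyExponent μ) ∧ ∀ i : ℕ, 1 ≤ i → i ≤ 4 → ∀ w,
      ‖iteratedFDeriv ℝ i (levyExponent μ) w‖ ≤ (2 * Real.pi) ^ i * ∫ y, ‖y‖ ^ i ∂μ := by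
  have hgm := aestronglyMeasurable_levyGradient μ
  have h1 : Integrable (fun y => ‖y‖) μ := by simpa using h 1 le_rfl (by norm_num)
  have hder := hasFDerivAt_levyExponent h1
  have hgi (n : ℕ) (hn : n ≤ ((3 : ℕ) : ℕ∞)) : Integrable (fun v => ‖v‖ ^ n * ‖levyGradient v‖) μ := by
    have hn' : n ≤ 3 := by exact_mod_cast hn
    refine ((h (n + 1) (by omega) (by omega)).const_mul (2 * Real.pi)).mono' ?_
      (.of_forall fun v => ?_)
    · exact (by fun_prop : Continuous fun v : E => ‖v‖ ^ n).aestronglyMeasurable.mul hgm.norm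
    · rw [Real.norm_of_nonneg (by positivity)]
      calc ‖v‖ ^ n * ‖levyGradient v‖ ≤ ‖v‖ ^ n * (2 * Real.pi * ‖v‖) := by gcongr; exact norm_levyGradient_le v
        _ = _ := by ring
  have hfd : fderiv ℝ (levyExponent μ) = VectorFourier.fourierIntegral 𝐞 μ negInner.toLinearMap₁₂ levyGradient :=
    funext fun w => (hder w).fderiv
  constructor
  · rw [show (4 : ℕ∞ω) = 3 + 1 by norm_num, contDiff_succ_iff_fderiv]
    refine ⟨fun w => (hder w).differentiableAt, by simp, ?_⟩
    rw [hfd]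
    exact VectorFourier.contDiff_fourierIntegral negInner hgi
  · intro i hi hi4 w
    obtain ⟨j, rfl⟩ : ∃ j, i = j + 1 := ⟨i - 1, by omega⟩
    rw [← norm_iteratedFDeriv_fderiv, hfd,
      VectorFourier.iteratedFDeriv_fourierIntegral negInner hgi hgm (n := j)
        (by exact_mod_cast (by omega : j ≤ 3)), ← integral_const_mul]
    refine (VectorFourier.norm_fourierIntegral_le_integral_norm _ _ _ _ _).trans ?_
    refine integral_mono_of_nonneg (.of_forall fun v => norm_nonneg _)
      ((h (j + 1) hi hi4).const_mul _) (.of_forall fun v => ?_)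
    refine (VectorFourier.norm_fourierPowSMulRight_le negInner levyGradient v j).trans ?_
    calc (2 * Real.pi * ‖(negInner : E →L[ℝ] E →L[ℝ] ℝ)‖) ^ j * ‖v‖ ^ j * ‖levyGradient v‖
        ≤ (2 * Real.pi * 1) ^ j * ‖v‖ ^ j * (2 * Real.pi * ‖v‖) := by
          gcongr; exacts [norm_negInner_le, norm_levyGradient_le v]
      _ = _ := by ring

/-! ### Decay of the Fourier transform -/

/-- The number `D` stands for the fourth root of `1 + m₁⁴ + m₄`; the constant
`24 (4π)⁴` is `n! (4π)ⁿ` at `n = 4`. -/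
theorem norm_iteratedFDeriv_cexp_neg_levyExponent {μ : Measure E}
    (h1 : Integrable (fun y => ‖y‖) μ) (h4 : Integrable (fun y => ‖y‖ ^ 4) μ) {D : ℝ}
    (hD : 1 ≤ D) (hD1 : ∫ y, ‖y‖ ∂μ ≤ D) (hD4 : ∫ y, ‖y‖ ^ 4 ∂μ ≤ D ^ 4) :
    ContDiff ℝ 4 (fun w => Complex.exp (-levyExponent μ w)) ∧ ∀ n : ℕ, n ≤ 4 → ∀ w,
      ‖iteratedFDeriv ℝ n (fun w => Complex.exp (-levyExponent μ w)) w‖ ≤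
        24 * (4 * Real.pi) ^ 4 * D ^ 4 * Real.exp (-(levyExponent μ w).re) := by
  obtain ⟨hc, hb⟩ := iteratedFDeriv_levyExponent
    fun i hi hi4 => (moment_bound h1 h4 hD hD1 hD4 hi hi4).1
  have hexp : ContDiff ℝ 4 Complex.exp := Complex.contDiff_exp
  refine ⟨hexp.comp hc.neg, fun n hn w => ?_⟩
  have hπ := Real.pi_gt_three
  have h := norm_iteratedFDeriv_comp_le (n := n) hexp hc.neg (by exact_mod_cast hn) w
    (C := Real.exp (-(levyExponent μ w).re)) (D := 4 * Real.pi * D)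
    (fun i _ => by rw [norm_iteratedFDeriv_cexp, Complex.neg_re]) (fun i hi hin => by
      have e : ‖iteratedFDeriv ℝ i (fun w => -levyExponent μ w) w‖
          = ‖iteratedFDeriv ℝ i (levyExponent μ) w‖ := by
        rw [← norm_neg (iteratedFDeriv ℝ i (levyExponent μ) w), ← iteratedFDeriv_neg_apply]
        rfl
      rw [e]
      calc _ ≤ (2 * Real.pi) ^ i * ∫ y, ‖y‖ ^ i ∂μ := hb i hi (hin.trans hn) w
        _ ≤ (2 * Real.pi) ^ i * (2 * D ^ i) := by
          gcongr; exact (moment_bound h1 h4 hD hD1 hD4 hi (hin.trans hn)).2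
        _ ≤ (2 * Real.pi) ^ i * (2 ^ i * D ^ i) := by
          gcongr; exact le_self_pow₀ one_le_two (by omega)
        _ = (4 * Real.pi * D) ^ i := by rw [← mul_pow, ← mul_pow]; ring)
  refine h.trans ?_
  have hf : (n.factorial : ℝ) ≤ 24 := by
    exact_mod_cast (Nat.factorial_le hn : n.factorial ≤ Nat.factorial 4)
  have hp : (4 * Real.pi * D) ^ n ≤ (4 * Real.pi * D) ^ 4 :=
    pow_le_pow_right₀ (by nlinarith) hn
  calc _ ≤ 24 * Real.exp (-(levyExponent μ w).re) * (4 * Real.pi * D) ^ 4 := by gcongr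
    _ = _ := by ring

/-- If the derivatives of `f` up to order four are dominated by `q`, and `q` has a finite first
moment, then `𝓕 f` and its gradient decay like `(1 + ‖x‖)^{-4}`. -/
theorem norm_iteratedFDeriv_fourier_le_rpow {f : E → ℂ} (hf : ContDiff ℝ 4 f) {q : E → ℝ}
    (hq0 : ∀ w, 0 ≤ q w) (hq : Integrable (fun w => q w * (1 + ‖w‖)))
    (hfq : ∀ n : ℕ, n ≤ 4 → ∀ w, ‖iteratedFDeriv ℝ n f w‖ ≤ q w) {k : ℕ} (hk : k ≤ 1) (x : E) :
    ‖iteratedFDeriv ℝ k (𝓕 f) x‖ ≤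
      81920 * Real.pi * (∫ w, q w * (1 + ‖w‖)) * (1 + ‖x‖) ^ (-4 : ℝ) := by
  have pt (a n : ℕ) (ha : a ≤ 1) (hn : n ≤ 4) (v : E) :
      ‖v‖ ^ a * ‖iteratedFDeriv ℝ n f v‖ ≤ q v * (1 + ‖v‖) := by
    have : ‖v‖ ^ a ≤ 1 + ‖v‖ := by
      interval_cases a <;> simp
    calc _ ≤ (1 + ‖v‖) * q v := by gcongr; exact hfq n hn v
      _ = _ := mul_comm _ _
  have hint (a n : ℕ) (ha : (a : ℕ∞) ≤ (1 : ℕ)) (hn : (n : ℕ∞) ≤ (4 : ℕ)) :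
      Integrable (fun v => ‖v‖ ^ a * ‖iteratedFDeriv ℝ n f v‖) := by
    have ha' : a ≤ 1 := by exact_mod_cast ha
    have hn' : n ≤ 4 := by exact_mod_cast hn
    refine hq.mono' ?_ (.of_forall fun v => ?_)
    · have := hf.continuous_iteratedFDeriv (m := n) (by exact_mod_cast hn')
      exact Continuous.aestronglyMeasurable (by fun_prop)
    · rw [Real.norm_of_nonneg (by positivity)]
      exact pt a n ha' hn' v
  set J := ∫ w, q w * (1 + ‖w‖) with hJ
  have hJ0 : 0 ≤ J := integral_nonneg fun w => mul_nonneg (hq0 w) (by positivity)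
  have hπ := Real.pi_gt_three
  have key (n : ℕ) (hn : n ≤ 4) :
      ‖x‖ ^ n * ‖iteratedFDeriv ℝ k (𝓕 f) x‖ ≤ 5120 * Real.pi * J := by
    refine (Real.pow_mul_norm_iteratedFDeriv_fourier_le (K := (1 : ℕ)) (N := (4 : ℕ))
      (by exact_mod_cast hf) hint (by exact_mod_cast hk) (by exact_mod_cast hn) x).trans ?_
    -- There are at most `2 · 5` summands, each at most `J`.
    have hs : ∑ p ∈ Finset.range (k + 1) ×ˢ Finset.range (n + 1),
        ∫ v, ‖v‖ ^ p.1 * ‖iteratedFDeriv ℝ p.2 f v‖ ≤ 10 * J := by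
      refine (Finset.sum_le_card_nsmul _ _ J fun p hp => ?_).trans ?_
      · simp only [Finset.mem_product, Finset.mem_range] at hp
        exact integral_mono_of_nonneg (.of_forall fun v => by positivity) hq
          (.of_forall fun v => pt p.1 p.2 (by omega) (by omega) v)
      · rw [nsmul_eq_mul, Finset.card_product, Finset.card_range, Finset.card_range]
        gcongr
        exact_mod_cast (Nat.mul_le_mul (by omega : k + 1 ≤ 2) (by omega : n + 1 ≤ 5))
    have e1 : (2 * Real.pi) ^ k ≤ 2 * Real.pi := by
      calc _ ≤ (2 * Real.pi) ^ 1 := pow_le_pow_right₀ (by linarith) hk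
        _ = _ := pow_one _
    have e2 : (2 * (k : ℝ) + 2) ^ n ≤ 256 := by
      have hk' : (k : ℝ) ≤ 1 := by exact_mod_cast hk
      calc (2 * (k : ℝ) + 2) ^ n ≤ (2 * 1 + 2) ^ n := by gcongr
        _ ≤ (2 * 1 + 2) ^ 4 := pow_le_pow_right₀ (by norm_num) hn
        _ = 256 := by norm_num
    calc _ ≤ (2 * Real.pi) * 256 * (10 * J) := by gcongr
      _ = _ := by ring
  have h0 := key 0 (by norm_num)
  have h4 := key 4 le_rfl
  rw [Real.rpow_neg (by positivity), ← div_eq_mul_inv, le_div_iff₀ (by positivity)]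
  have e : (1 + ‖x‖) ^ (4 : ℝ) = (1 + ‖x‖) ^ (4 : ℕ) := by
    rw [← Real.rpow_natCast]; norm_num
  have e8 : (1 + ‖x‖) ^ 4 ≤ 8 * (1 + ‖x‖ ^ 4) := by
    nlinarith [sq_nonneg (‖x‖ - 1), sq_nonneg (‖x‖ ^ 2 - 1), mul_nonneg (norm_nonneg x)
      (sq_nonneg (‖x‖ - 1)), mul_nonneg (sq_nonneg ‖x‖) (sq_nonneg (‖x‖ - 1))]
  rw [e]
  calc _ ≤ ‖iteratedFDeriv ℝ k (𝓕 f) x‖ * (8 * (1 + ‖x‖ ^ 4)) := by gcongr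
    _ ≤ _ := by rw [pow_zero] at h0; linarith

/-! ### Inversion for probability measures -/

/-- A probability measure whose rescaled characteristic function `f` is integrable together with
`𝓕 f` has the density `𝓕 f`, which is nonnegative everywhere. -/
theorem eq_withDensity_of_integrable_charFun {k : Measure E} [IsProbabilityMeasure k]
    {f : E → ℂ} (hfk : ∀ w, f w = charFun k ((2 * Real.pi) • w)) (hfc : Continuous f)
    (hf : Integrable f) (hF : Integrable (𝓕 f)) :
    (∀ x, 0 ≤ (𝓕 f x).re) ∧ k = volume.withDensity (fun x => ENNReal.ofReal (𝓕 f x).re) := by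
  have hconj (w : E) : f (-w) = (starRingEnd ℂ) (f w) := by
    rw [hfk, hfk, smul_neg, charFun_neg]
  have hreal (x : E) : ((𝓕 f x).re : ℂ) = 𝓕 f x := by
    rw [← Complex.conj_eq_iff_re, Real.fourier_eq, ← integral_conj,
      ← integral_neg_eq_self (fun v => 𝐞 (-⟪v, x⟫) • f v)]
    refine integral_congr_ae (.of_forall fun v => ?_)
    simp only [hconj, Circle.smul_def, smul_eq_mul, map_mul, inner_neg_left, neg_neg]
    rw [← Circle.coe_inv_eq_conj, AddChar.map_neg_eq_inv, inv_inv]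
  have hFc : Continuous (𝓕 f) := by
    exact VectorFourier.fourierIntegral_continuous Real.continuous_fourierChar
      (L := innerₗ E) continuous_inner hf
  set p : E → ℝ := fun x => (𝓕 f x).re with hp
  have hpc : Continuous p := Complex.continuous_re.comp hFc
  have hpi : Integrable p := hF.re
  have hfin (g : E → ℝ) (hg : Integrable g) :
      IsFiniteMeasure (volume.withDensity fun x => ENNReal.ofReal (g x)) :=
    isFiniteMeasure_withDensity_ofReal hg.2
  have hch (g : E → ℝ) (hgc : Continuous g) (t : E) :
      charFun (volume.withDensity fun x => ENNReal.ofReal (g x)) t =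
        ∫ x, ((max (g x) 0 : ℝ) : ℂ) * Complex.exp (⟪x, t⟫ * Complex.I) := by
    rw [charFun_apply, integral_withDensity_eq_integral_toReal_smul (by fun_prop)
      (.of_forall fun x => ENNReal.ofReal_lt_top)]
    simp [ENNReal.toReal_ofReal']
  have hmi (g : E → ℝ) (hg : Integrable g) (t : E) : Integrable fun x =>
      ((max (g x) 0 : ℝ) : ℂ) * Complex.exp (⟪x, t⟫ * Complex.I) := by
    refine (hg.pos_part.ofReal (𝕜 := ℂ)).mul_bdd (c := 1)
      (Continuous.aestronglyMeasurable (by fun_prop)) (.of_forall fun x => ?_)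
    rw [Complex.norm_exp_ofReal_mul_I]
  have := hfin p hpi
  have := hfin (fun x => -p x) hpi.neg
  -- Moving the negative part to the side of `k` keeps both sides positive measures.
  have hsum : k + volume.withDensity (fun x => ENNReal.ofReal (-p x)) =
      volume.withDensity (fun x => ENNReal.ofReal (p x)) := by
    apply Measure.ext_of_charFun
    funext t
    have hb (ν : Measure E) [IsFiniteMeasure ν] :
        Integrable (fun x => Complex.exp (⟪x, t⟫ * Complex.I)) ν :=
      (integrable_const (1 : ℝ)).mono' (Continuous.aestronglyMeasurable (by fun_prop))
        (.of_forall fun x => by rw [Complex.norm_exp_ofReal_mul_I])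
    have hinv : 𝓕⁻ (𝓕 f) ((2 * Real.pi)⁻¹ • t) = charFun k t := by
      rw [hfc.fourierInv_fourier_eq hf hF, hfk, smul_inv_smul₀ (by positivity)]
    rw [charFun_apply, integral_add_measure (hb _) (hb _), ← charFun_apply, ← charFun_apply,
      hch (fun x => -p x) hpc.neg, hch _ hpc, ← eq_sub_iff_add_eq,
      ← integral_sub (hmi p hpi t) (hmi (fun x => -p x) hpi.neg t), ← hinv, Real.fourierInv_eq]
    refine integral_congr_ae (.of_forall fun x => ?_)
    have hmax : max (p x) 0 - max (-p x) 0 = p x := by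
      rcases le_total (p x) 0 with h | h <;> simp [h]
    simp only
    rw [← sub_mul, ← Complex.ofReal_sub, hmax, ← hreal x, Circle.smul_def,
      Real.fourierChar_apply', smul_eq_mul, mul_comm, Circle.coe_exp, inner_smul_right,
      mul_inv_cancel_left₀ (by positivity)]
  have hA : MeasurableSet {x | p x < 0} := (isOpen_lt hpc continuous_const).measurableSet
  have hnull : volume {x | p x < 0} = 0 := by
    have hpos : volume.withDensity (fun x => ENNReal.ofReal (p x)) {x | p x < 0} = 0 := by
      rw [withDensity_apply _ hA]
      refine setLIntegral_eq_zero hA fun x hx => ?_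
      exact ENNReal.ofReal_of_nonpos (le_of_lt hx)
    have hneg : volume.withDensity (fun x => ENNReal.ofReal (-p x)) {x | p x < 0} = 0 := by
      rw [← hsum, Measure.add_apply] at hpos
      exact (add_eq_zero.1 hpos).2
    rw [withDensity_apply_eq_zero (by fun_prop)] at hneg
    have hsub : {x | p x < 0} ⊆ {x | ENNReal.ofReal (-p x) ≠ 0} ∩ {x | p x < 0} :=
      fun x hx => ⟨by simpa using hx, hx⟩
    exact measure_mono_null hsub hneg
  have hp0 (x : E) : 0 ≤ p x := by
    by_contra! hx
    exact (isOpen_lt hpc continuous_const).measure_ne_zero volume ⟨x, hx⟩ hnull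
  refine ⟨hp0, ?_⟩
  rw [← hsum]
  simp [ENNReal.ofReal_of_nonpos, hp0]

end LevyDensity

/-! ### The gradient bound -/

open LevyDensity FourierTransform in
/-- Let `λ` be a non-negative measure on `ℝ³` with finite first and fourth moments, and let
`k` be the (infinitely divisible) probability distribution with Fourier transform
`k̂(ξ) = exp(−Φ(ξ))`, `Φ(ξ) = ∫ (1 − e^{i⟨ξ,y⟩}) λ(dy)`.  If `∫ e^{−Re Φ(ξ)}(1+|ξ|) dξ < ∞`
then `k` has a (differentiable) density with
`‖∇k‖_{L¹} ≤ C (1 + m₁(λ)⁴ + m₄(λ)) ∫ e^{−Re Φ(ξ)}(1+|ξ|) dξ`, `C` a universal constant. -/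
theorem stmt_10 :
    ∃ C : ℝ, 0 < C ∧
      ∀ (lam k : Measure (EuclideanSpace ℝ (Fin 3))) (Φ : EuclideanSpace ℝ (Fin 3) → ℂ),
      IsProbabilityMeasure k →
      Integrable (fun y => ‖y‖) lam → Integrable (fun y => ‖y‖ ^ 4) lam →
      (∀ ξ, Φ ξ = ∫ y, (1 - Complex.exp (Complex.I * (⟪ξ, y⟫ : ℝ))) ∂lam) →
      (∀ ξ, ∫ x, Complex.exp (Complex.I * (⟪ξ, x⟫ : ℝ)) ∂k = Complex.exp (-Φ ξ)) →
      Integrable (fun ξ : EuclideanSpace ℝ (Fin 3) =>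
        Real.exp (-(Φ ξ).re) * (1 + ‖ξ‖)) →
      ∃ ρ : EuclideanSpace ℝ (Fin 3) → ℝ, (∀ x, 0 ≤ ρ x) ∧ Differentiable ℝ ρ ∧
        k = volume.withDensity (fun x => ENNReal.ofReal (ρ x)) ∧
        ∫ x, ‖fderiv ℝ ρ x‖
          ≤ C * (1 + (∫ y, ‖y‖ ∂lam) ^ 4 + ∫ y, ‖y‖ ^ 4 ∂lam) *
              ∫ ξ : EuclideanSpace ℝ (Fin 3), Real.exp (-(Φ ξ).re) * (1 + ‖ξ‖) := by
  set I₄ : ℝ := ∫ x : EuclideanSpace ℝ (Fin 3), (1 + ‖x‖) ^ (-4 : ℝ) with hI₄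
  have hI₄0 : 0 ≤ I₄ := integral_nonneg fun x => by positivity
  have hI₄i : Integrable fun x : EuclideanSpace ℝ (Fin 3) => (1 + ‖x‖) ^ (-4 : ℝ) :=
    integrable_one_add_norm (by rw [finrank_euclideanSpace_fin]; norm_num)
  have hπ := Real.pi_gt_three
  refine ⟨1 + 81920 * Real.pi * (24 * (4 * Real.pi) ^ 4) * I₄, by positivity, ?_⟩
  intro lam k Φ hk h1 h4 hΦ hkΦ hint
  set m₁ := ∫ y, ‖y‖ ∂lam with hm₁
  set m₄ := ∫ y, ‖y‖ ^ 4 ∂lam with hm₄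
  have hm₁0 : 0 ≤ m₁ := integral_nonneg fun y => norm_nonneg y
  have hm₄0 : 0 ≤ m₄ := integral_nonneg fun y => by positivity
  obtain ⟨D, hD, hDM⟩ : ∃ D : ℝ, 1 ≤ D ∧ D ^ 4 = 1 + m₁ ^ 4 + m₄ := by
    refine ⟨(1 + m₁ ^ 4 + m₄) ^ ((4 : ℕ) : ℝ)⁻¹, Real.one_le_rpow ?_ (by positivity),
      Real.rpow_inv_natCast_pow (by positivity) (by norm_num)⟩
    have : 0 ≤ m₁ ^ 4 := by positivity
    linarith
  have hD1 : m₁ ≤ D := by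
    refine (pow_le_pow_iff_left₀ hm₁0 (by linarith) (by norm_num : 4 ≠ 0)).1 ?_
    linarith
  have hD4 : m₄ ≤ D ^ 4 := by
    have : 0 ≤ m₁ ^ 4 := by positivity
    linarith
  have hlevy (w : EuclideanSpace ℝ (Fin 3)) : levyExponent lam w = Φ ((2 * Real.pi) • w) := by
    rw [hΦ, levyExponent]
    refine integral_congr_ae (.of_forall fun y => ?_)
    simp only [Real.fourierChar_apply']
    rw [Circle.coe_exp, real_inner_smul_left, real_inner_comm w y, mul_comm Complex.I]
  set f : EuclideanSpace ℝ (Fin 3) → ℂ := fun w => Complex.exp (-levyExponent lam w) with hf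
  have hfk (w : EuclideanSpace ℝ (Fin 3)) : f w = charFun k ((2 * Real.pi) • w) := by
    rw [hf]
    simp only
    rw [hlevy, ← hkΦ, charFun_apply]
    refine integral_congr_ae (.of_forall fun y => ?_)
    simp only
    rw [real_inner_comm, mul_comm]
  obtain ⟨hfc, hfb⟩ := norm_iteratedFDeriv_cexp_neg_levyExponent h1 h4 hD hD1 hD4
  rw [← hf] at hfc hfb
  set I := ∫ ξ : EuclideanSpace ℝ (Fin 3), Real.exp (-(Φ ξ).re) * (1 + ‖ξ‖) with hI
  have hI0 : 0 ≤ I := integral_nonneg fun ξ => by positivity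
  set c := 24 * (4 * Real.pi) ^ 4 * D ^ 4 with hc
  have hc0 : 0 ≤ c := by positivity
  -- The substitution `ξ = 2πw` only shrinks the weighted integral, since `2π ≥ 1`.
  have hpt (w : EuclideanSpace ℝ (Fin 3)) :
      c * Real.exp (-(levyExponent lam w).re) * (1 + ‖w‖) ≤
        c * (Real.exp (-(Φ ((2 * Real.pi) • w)).re) * (1 + ‖(2 * Real.pi) • w‖)) := by
    rw [hlevy, mul_assoc]
    gcongr
    rw [norm_smul, Real.norm_of_nonneg (by positivity)]
    exact le_mul_of_one_le_left (norm_nonneg w) (by linarith)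
  have hint' : Integrable fun w : EuclideanSpace ℝ (Fin 3) =>
      c * (Real.exp (-(Φ ((2 * Real.pi) • w)).re) * (1 + ‖(2 * Real.pi) • w‖)) :=
    (hint.comp_smul (by positivity : 2 * Real.pi ≠ 0)).const_mul c
  have hLc : Continuous (levyExponent lam) :=
    (iteratedFDeriv_levyExponent fun i hi hi4 =>
      (moment_bound h1 h4 hD hD1 hD4 hi hi4).1).1.continuous
  have hq : Integrable fun w : EuclideanSpace ℝ (Fin 3) =>
      c * Real.exp (-(levyExponent lam w).re) * (1 + ‖w‖) := by
    refine hint'.mono' (Continuous.aestronglyMeasurable (by fun_prop)) (.of_forall fun w => ?_)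
    rw [Real.norm_of_nonneg (by positivity)]
    exact hpt w
  have hqI : ∫ w, c * Real.exp (-(levyExponent lam w).re) * (1 + ‖w‖) ≤ c * I := by
    refine (integral_mono hq hint' hpt).trans ?_
    rw [integral_const_mul, Measure.integral_comp_smul volume
      (fun ξ => Real.exp (-(Φ ξ).re) * (1 + ‖ξ‖)), smul_eq_mul, ← hI]
    gcongr
    refine mul_le_of_le_one_left hI0 ?_
    rw [abs_of_nonneg (by positivity)]
    exact inv_le_one_of_one_le₀ (one_le_pow₀ (by linarith))
  have hdecay {j : ℕ} (hj : j ≤ 1) (x : EuclideanSpace ℝ (Fin 3)) :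
      ‖iteratedFDeriv ℝ j (𝓕 f) x‖ ≤ 81920 * Real.pi * (c * I) * (1 + ‖x‖) ^ (-4 : ℝ) := by
    refine (norm_iteratedFDeriv_fourier_le_rpow hfc (fun w => by positivity) hq hfb hj x).trans ?_
    gcongr
  have hfi : Integrable f := by
    refine hq.mono' hfc.continuous.aestronglyMeasurable (.of_forall fun w => ?_)
    have h := hfb 0 (by norm_num) w
    rw [norm_iteratedFDeriv_zero] at h
    exact h.trans (le_mul_of_one_le_right (by positivity) (by simp))
  have hfi' : Integrable fun w => ‖w‖ * ‖f w‖ := by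
    refine hq.mono' (Continuous.aestronglyMeasurable
      (continuous_norm.mul hfc.continuous.norm)) (.of_forall fun w => ?_)
    have h := hfb 0 (by norm_num) w
    rw [norm_iteratedFDeriv_zero] at h
    rw [Real.norm_of_nonneg (by positivity), mul_comm]
    exact mul_le_mul h (by simp) (norm_nonneg w) (by positivity)
  have hFd : Differentiable ℝ (𝓕 f) := Real.differentiable_fourier hfi hfi'
  have hFi : Integrable (𝓕 f) := by
    refine (hI₄i.const_mul (81920 * Real.pi * (c * I))).mono' hFd.continuous.aestronglyMeasurable (.of_forall fun x => ?_)
    have h := hdecay zero_le_one x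
    rwa [norm_iteratedFDeriv_zero] at h
  obtain ⟨hρ0, hρk⟩ := eq_withDensity_of_integrable_charFun hfk hfc.continuous hfi hFi
  have hρd (x : EuclideanSpace ℝ (Fin 3)) :
      HasFDerivAt (fun x => (𝓕 f x).re) (Complex.reCLM.comp (fderiv ℝ (𝓕 f) x)) x :=
    Complex.reCLM.hasFDerivAt.comp x (hFd x).hasFDerivAt
  refine ⟨fun x => (𝓕 f x).re, hρ0, fun x => (hρd x).differentiableAt, hρk, ?_⟩
  have hgrad (x : EuclideanSpace ℝ (Fin 3)) : ‖fderiv ℝ (fun x => (𝓕 f x).re) x‖ ≤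
      81920 * Real.pi * (c * I) * (1 + ‖x‖) ^ (-4 : ℝ) := by
    have h := hdecay le_rfl x
    rw [norm_iteratedFDeriv_one] at h
    refine le_trans ?_ h
    rw [(hρd x).fderiv]
    refine (ContinuousLinearMap.opNorm_comp_le _ _).trans ?_
    rw [Complex.reCLM_norm, one_mul]
  calc ∫ x, ‖fderiv ℝ (fun x => (𝓕 f x).re) x‖
      ≤ ∫ x : EuclideanSpace ℝ (Fin 3), 81920 * Real.pi * (c * I) * (1 + ‖x‖) ^ (-4 : ℝ) :=
        integral_mono_of_nonneg (.of_forall fun x => norm_nonneg _) (hI₄i.const_mul _)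
          (.of_forall hgrad)
    _ = 81920 * Real.pi * (24 * (4 * Real.pi) ^ 4) * I₄ * (D ^ 4 * I) := by
        rw [integral_const_mul, hc]; ring
    _ ≤ (1 + 81920 * Real.pi * (24 * (4 * Real.pi) ^ 4) * I₄) * (D ^ 4 * I) := by
        gcongr; linarith
    _ = _ := by rw [hDM]; ring
end
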